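/- (Strong duality for KL-regularized problems.) Let N ≥ 1, let ξ ∈ ℝ^{N×N} have strictly positive entries, and let φ_1, φ_2 : ℝ^{N×N} → ℝ ∪ {+∞} be proper, lower semicontinuous, convex functions such that ri(dom φ_1) ∩ ri(dom φ_2) ∩ {π : all entries of π are strictly positive} ≠ ∅. Then min_{π ∈ ℝ_+^{N×N}} KL(π|ξ) + φ_1(π) + φ_2(π) = max_{u_1, u_2 ∈ ℝ^{N×N}} [ −φ_1^*(u_1) − φ_2^*(u_2) − Σ_{i,j} ξ_{ij} e^{−(u_1+u_2)_{ij}} + Σ_{i,j} ξ_{ij} ], the maximum on the right is attained at some (u_1^*, u_2^*), and the unique primal minimizer is recovered as π^* = ξ ⊙ e^{−u_1^* − u_2^*} (entrywise exponential and product). -/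

import Mathlib

open scoped BigOperators

noncomputable section

def ProperLSCConvex {E : Type*} [AddCommGroup E] [Module ℝ E] [TopologicalSpace E]
    (f : E → EReal) : Prop :=
  (∀ x, f x ≠ ⊥) ∧ (∃ x, f x ≠ ⊤) ∧ LowerSemicontinuous f ∧
    ∀ x y : E, ∀ a b : ℝ, 0 ≤ a → 0 ≤ b → a + b = 1 →
      f (a • x + b • y) ≤ (a : EReal) * f x + (b : EReal) * f y

def KLmat {N : ℕ} (π ξ : Fin N → Fin N → ℝ) : ℝ :=
  ∑ i, ∑ j, (π i j * Real.log (π i j / ξ i j) - π i j + ξ i j)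

def frob {N : ℕ} (u π : Fin N → Fin N → ℝ) : ℝ :=
  ∑ i, ∑ j, u i j * π i j

/-- Legendre–Fenchel conjugate `φ^*(u) = sup_π ⟨u,π⟩ - φ(π)`. -/
def conj {N : ℕ} (φ : (Fin N → Fin N → ℝ) → EReal) (u : Fin N → Fin N → ℝ) : EReal :=
  ⨆ π : Fin N → Fin N → ℝ, ((frob u π : ℝ) : EReal) - φ π

lemma core_sep {E : Type*} [AddCommGroup E] [Module ℝ E] (S : Set (E × ℝ)) (hS : Convex ℝ S)
    (h0 : ∃ t, ((0 : E), t) ∈ S) (hri : ∀ z ∈ S, ∃ ε : ℝ, 0 < ε ∧ ∃ t, (-(ε • z.1), t) ∈ S)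
    (m : ℝ) (hm : ∀ t, ((0 : E), t) ∈ S → m ≤ t) :
    ∃ L : E →ₗ[ℝ] ℝ, ∀ z ∈ S, m + L z.1 ≤ z.2 := by
  have key : ∀ z ∈ S, ∀ z' ∈ S, ∀ c c' : ℝ, 0 ≤ c → 0 ≤ c' → ∃ w ∈ S,
      c • z.1 + c' • z'.1 = (c + c') • w.1 ∧
      c * (z.2 - m) + c' * (z'.2 - m) = (c + c') * (w.2 - m) := by
    intro z hz z' hz' c c' hc hc'
    by_cases hne : c + c' = 0
    · have e1 : c = 0 := by linarith
      have e2 : c' = 0 := by linarith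
      exact ⟨z, hz, by simp [e1, e2], by simp [e1, e2]⟩
    refine ⟨(c / (c + c')) • z + (c' / (c + c')) • z',
      hS hz hz' (by positivity) (by positivity) (by field_simp), ?_, ?_⟩
    · simp only [Prod.fst_add, Prod.smul_fst, smul_add, smul_smul]
      congr 2 <;> field_simp
    · simp only [Prod.snd_add, Prod.smul_snd, smul_eq_mul]
      field_simp
      ring
  let K : ConvexCone ℝ (E × ℝ) :=
    { carrier := {q | ∃ c : ℝ, 0 ≤ c ∧ ∃ z ∈ S, q.1 = c • z.1 ∧ c * (z.2 - m) ≤ q.2}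
      smul_mem' := by
        rintro a ha q ⟨c, hc, z, hz, h1, h2⟩
        refine ⟨a * c, by positivity, z, hz, ?_, ?_⟩
        · simp [h1, smul_smul]
        · simp only [Prod.smul_snd, smul_eq_mul]
          rw [mul_assoc]
          exact mul_le_mul_of_nonneg_left h2 ha.le
      add_mem' := by
        rintro q ⟨c, hc, z, hz, h1, h2⟩ q' ⟨c', hc', z', hz', h1', h2'⟩
        obtain ⟨w, hw, e1, e2⟩ := key z hz z' hz' c c' hc hc'
        refine ⟨c + c', by positivity, w, hw, ?_, ?_⟩
        · rw [← e1, Prod.fst_add, h1, h1']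
        · rw [← e2, Prod.snd_add]; linarith }
  let V : Submodule ℝ E :=
    { carrier := {x | ∃ c : ℝ, 0 < c ∧ ∃ z ∈ S, x = c • z.1}
      zero_mem' := by
        obtain ⟨t, ht⟩ := h0
        exact ⟨1, one_pos, _, ht, by simp⟩
      add_mem' := by
        rintro q q' ⟨c, hc, z, hz, h1⟩ ⟨c', hc', z', hz', h1'⟩
        obtain ⟨w, hw, e1, e2⟩ := key z hz z' hz' c c' hc.le hc'.le
        exact ⟨c + c', by positivity, w, hw, by rw [← e1, h1, h1']⟩
      smul_mem' := by
        rintro a q ⟨c, hc, z, hz, h1⟩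
        rcases lt_trichotomy a 0 with ha | ha | ha
        · obtain ⟨ε, hε, t, ht⟩ := hri z hz
          refine ⟨(-a) * c / ε, div_pos (mul_pos (by linarith) hc) hε, _, ht, ?_⟩
          simp only [h1, smul_smul, ← neg_smul]
          congr 1
          field_simp
        · obtain ⟨t, ht⟩ := h0
          exact ⟨1, one_pos, _, ht, by simp [ha]⟩
        · exact ⟨a * c, by positivity, z, hz, by rw [h1, smul_smul]⟩ }
  obtain ⟨p, hp⟩ := V.subtype.exists_leftInverse_of_injective (by simp)
  have hp' : ∀ x (hx : x ∈ V), ((p x : V) : E) = x := by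
    intro x hx
    have := LinearMap.congr_fun hp ⟨x, hx⟩
    simpa using congrArg Subtype.val this
  let K' : PointedCone ℝ (E × ℝ) :=
    (K.comap (LinearMap.prodMap (V.subtype ∘ₗ p) LinearMap.id)).toPointedCone (by
      obtain ⟨t, ht⟩ := h0
      exact ⟨0, le_rfl, _, ht, by simp, by simp⟩)
  have hK' : ∀ q : E × ℝ, q ∈ K' ↔ ∃ c : ℝ, 0 ≤ c ∧ ∃ z ∈ S, ((p q.1 : V) : E) = c • z.1 ∧
      c * (z.2 - m) ≤ q.2 := fun q => Iff.rfl
  let f : (E × ℝ) →ₗ.[ℝ] ℝ :=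
    { domain := (⊥ : Submodule ℝ E).prod ⊤
      toFun := (LinearMap.snd ℝ E ℝ) ∘ₗ ((⊥ : Submodule ℝ E).prod ⊤).subtype }
  have hf : ∀ x : f.domain, f x = (x : E × ℝ).2 := fun x => rfl
  obtain ⟨g, hg1, hg2⟩ := riesz_extension K' f (by
      rintro ⟨⟨x, s⟩, hx⟩ hK
      rw [hf]
      have hx0 : x = 0 := by simpa using hx.1
      subst hx0
      obtain ⟨c, hc, z, hz, h1, h2⟩ := (hK' _).1 hK
      simp only [map_zero, ZeroMemClass.coe_zero] at h1 h2 ⊢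
      rcases hc.eq_or_lt with rfl | hc
      · simpa using h2
      have : z.1 = 0 := by
        rcases smul_eq_zero.1 h1.symm with h | h
        · exact absurd h hc.ne'
        · exact h
      have := hm z.2 (by rw [← this]; exact hz)
      have : 0 ≤ c * (z.2 - m) := mul_nonneg hc.le (by linarith)
      linarith) (by
      rintro ⟨x, s⟩
      obtain ⟨c, hc, z, hz, h1⟩ := (p x).2
      refine ⟨⟨(0, c * (z.2 - m) - s), ⟨by simp, by simp⟩⟩, (hK' _).2 ⟨c, hc.le, z, hz, ?_, ?_⟩⟩
      · simpa using h1
      · simp)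
  refine ⟨-(g ∘ₗ LinearMap.inl ℝ E ℝ), fun z hz => ?_⟩
  have hzV : z.1 ∈ V := ⟨1, one_pos, z, hz, by simp⟩
  have h1 := hg2 (z.1, z.2 - m) ((hK' _).2 ⟨1, zero_le_one, z, hz, by simp [hp' _ hzV], by simp⟩)
  have h2 := hg1 ⟨(0, z.2 - m), ⟨by simp, by simp⟩⟩
  rw [hf] at h2
  have h3 : ((z.1, z.2 - m) : E × ℝ) = (z.1, 0) + (0, z.2 - m) := by simp
  rw [h3, map_add] at h1
  simp only at h2
  rw [h2] at h1
  simp only [LinearMap.neg_apply, LinearMap.comp_apply, LinearMap.inl_apply]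
  linarith

lemma ri_step {E : Type*} [NormedAddCommGroup E] [NormedSpace ℝ E] (C : Set E) (x y : E)
    (hx : x ∈ intrinsicInterior ℝ C) (hy : y ∈ C) :
    ∃ ε : ℝ, 0 < ε ∧ ∀ t : ℝ, 0 ≤ t → t ≤ ε → x - t • (y - x) ∈ C := by
  obtain ⟨x', hx', rfl⟩ := mem_intrinsicInterior.1 hx
  have hmem : ∀ t : ℝ, (x' : E) - t • (y - x') ∈ affineSpan ℝ C := by
    intro t
    have := AffineMap.lineMap_mem (-t) x'.2 (subset_affineSpan ℝ C hy)
    rw [AffineMap.lineMap_apply] at this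
    convert this using 1
    simp [sub_eq_add_neg, add_comm]
  let γ : ℝ → affineSpan ℝ C := fun t => ⟨(x' : E) - t • (y - x'), hmem t⟩
  have hγ : Continuous γ := by
    apply Continuous.subtype_mk
    fun_prop
  have hγ0 : γ 0 = x' := by
    apply Subtype.ext; simp [γ]
  have h1 : γ ⁻¹' (((↑) : affineSpan ℝ C → E) ⁻¹' C) ∈ nhds (0 : ℝ) := by
    apply hγ.continuousAt
    rw [hγ0]
    exact mem_interior_iff_mem_nhds.1 hx'
  obtain ⟨ε, hε, hb⟩ := Metric.mem_nhds_iff.1 h1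
  refine ⟨ε / 2, by positivity, fun t ht ht' => ?_⟩
  have : t ∈ Metric.ball (0 : ℝ) ε := by
    rw [Metric.mem_ball, dist_zero_right, Real.norm_eq_abs, abs_of_nonneg ht]; linarith
  exact hb this

lemma kl_bound {x p : ℝ} (hx : 0 ≤ x) (hp : 0 < p) :
    (√x - √p) ^ 2 ≤ x * Real.log (x / p) - x + p := by
  rcases hx.eq_or_lt with rfl | hx
  · simp [Real.sq_sqrt hp.le]
  · have ha : 0 < √x := Real.sqrt_pos.2 hx
    have hb : 0 < √p := Real.sqrt_pos.2 hp
    have ea : √x ^ 2 = x := Real.sq_sqrt hx.le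
    have eb : √p ^ 2 = p := Real.sq_sqrt hp.le
    generalize √x = a at *
    generalize √p = b at *
    subst ea eb
    rw [← div_pow, Real.log_pow]
    have h := Real.one_sub_inv_le_log_of_pos (div_pos ha hb)
    rw [inv_div] at h
    have h2 : a ^ 2 * (1 - b / a) ≤ a ^ 2 * Real.log (a / b) :=
      mul_le_mul_of_nonneg_left h (by positivity)
    have h3 : a ^ 2 * (1 - b / a) = a ^ 2 - a * b := by field_simp
    push_cast
    nlinarith

section KL
variable {N : ℕ}

/-- auxiliary gap -/
lemma KL_gap (ξ x v : Fin N → Fin N → ℝ) (hξ : ∀ i j, 0 < ξ i j) (hx : ∀ i j, 0 ≤ x i j) :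
    ∑ i, ∑ j, (√(x i j) - √(ξ i j * Real.exp (-v i j))) ^ 2 ≤
      KLmat x ξ + frob v x + (∑ i, ∑ j, ξ i j * Real.exp (-v i j)) - ∑ i, ∑ j, ξ i j := by
  unfold KLmat frob
  simp only [← Finset.sum_add_distrib, ← Finset.sum_sub_distrib]
  refine Finset.sum_le_sum fun i _ => Finset.sum_le_sum fun j _ => ?_
  have hp : 0 < ξ i j * Real.exp (-v i j) := mul_pos (hξ i j) (Real.exp_pos _)
  refine (kl_bound (hx i j) hp).trans_eq ?_
  rcases (hx i j).eq_or_lt with h | h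
  · rw [← h]; simp
  · rw [Real.log_div h.ne' hp.ne', Real.log_div h.ne' (hξ i j).ne',
      Real.log_mul (hξ i j).ne' (Real.exp_pos _).ne', Real.log_exp]
    ring

lemma KL_eq (ξ v : Fin N → Fin N → ℝ) (hξ : ∀ i j, 0 < ξ i j) :
    KLmat (fun i j => ξ i j * Real.exp (-v i j)) ξ +
      frob v (fun i j => ξ i j * Real.exp (-v i j)) =
      (∑ i, ∑ j, ξ i j) - (∑ i, ∑ j, ξ i j * Real.exp (-v i j)) := by
  unfold KLmat frob
  simp only [← Finset.sum_add_distrib, ← Finset.sum_sub_distrib]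
  refine Finset.sum_congr rfl fun i _ => Finset.sum_congr rfl fun j _ => ?_
  rw [mul_div_cancel_left₀ _ (hξ i j).ne', Real.log_exp]
  ring

lemma KL_term (ξ x : ℝ) (hξ : 0 < ξ) :
    x * Real.log (x / ξ) - x + ξ = x * Real.log x - x * Real.log ξ - x + ξ := by
  by_cases h : x = 0
  · simp [h]
  · rw [Real.log_div h hξ.ne']; ring

lemma KL_convex (ξ x y : Fin N → Fin N → ℝ) (hξ : ∀ i j, 0 < ξ i j)
    (hx : ∀ i j, 0 ≤ x i j) (hy : ∀ i j, 0 ≤ y i j) (a b : ℝ) (ha : 0 ≤ a) (hb : 0 ≤ b)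
    (hab : a + b = 1) : KLmat (a • x + b • y) ξ ≤ a * KLmat x ξ + b * KLmat y ξ := by
  unfold KLmat
  simp only [Finset.mul_sum, ← Finset.sum_add_distrib]
  refine Finset.sum_le_sum fun i _ => Finset.sum_le_sum fun j _ => ?_
  have h := Real.convexOn_mul_log.2 (hx i j) (hy i j) ha hb hab
  simp only [KL_term _ _ (hξ i j)]
  simp only [Pi.add_apply, Pi.smul_apply, smul_eq_mul] at h ⊢
  have : ξ i j = a * ξ i j + b * ξ i j := by rw [← add_mul, hab, one_mul]
  nlinarith

lemma KL_cont (ξ : Fin N → Fin N → ℝ) (hξ : ∀ i j, 0 < ξ i j) :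
    Continuous fun x : Fin N → Fin N → ℝ => KLmat x ξ := by
  unfold KLmat
  simp only [KL_term _ _ (hξ _ _)]
  refine continuous_finsetSum _ fun i _ => continuous_finsetSum _ fun j _ => ?_
  have h : Continuous fun x : Fin N → Fin N → ℝ => x i j := by fun_prop
  have := Real.continuous_mul_log.comp h
  simp only [Function.comp_def] at this
  fun_prop

lemma exists_frob (L : (Fin N → Fin N → ℝ) →ₗ[ℝ] ℝ) : ∃ u, ∀ x, L x = frob u x := by
  refine ⟨fun i j => L (Pi.single i (Pi.single j 1)), fun x => ?_⟩
  have : x = ∑ i, ∑ j, x i j • (Pi.single i (Pi.single j 1) : Fin N → Fin N → ℝ) := by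
    ext a b
    simp [Finset.sum_apply, Pi.single_apply, apply_ite, ite_apply]
  conv_lhs => rw [this]
  simp [frob, map_sum, mul_comm]

lemma epi_convex {E : Type*} [AddCommGroup E] [Module ℝ E] [TopologicalSpace E] {φ : E → EReal}
    (h : ProperLSCConvex φ) {x y : E} {s t a b : ℝ} (hx : φ x ≤ s) (hy : φ y ≤ t)
    (ha : 0 ≤ a) (hb : 0 ≤ b) (hab : a + b = 1) :
    φ (a • x + b • y) ≤ ((a * s + b * t : ℝ) : EReal) := by
  refine (h.2.2.2 x y a b ha hb hab).trans ?_
  push_cast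
  exact add_le_add (mul_le_mul_of_nonneg_left hx (by exact_mod_cast ha))
    (mul_le_mul_of_nonneg_left hy (by exact_mod_cast hb))

lemma exists_real {E : Type*} [AddCommGroup E] [Module ℝ E] [TopologicalSpace E] {φ : E → EReal}
    (h : ProperLSCConvex φ) {x : E} (hx : φ x ≠ ⊤) : ∃ r : ℝ, φ x = r :=
  ⟨(φ x).toReal, (EReal.coe_toReal hx (h.1 x)).symm⟩

lemma le_ne_top {a : EReal} {t : ℝ} (h : a ≤ t) : a ≠ ⊤ :=
  ne_top_of_le_ne_top (EReal.coe_ne_top t) h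

lemma minorant {φ : (Fin N → Fin N → ℝ) → EReal}
    (h : ProperLSCConvex φ) {p : Fin N → Fin N → ℝ}
    (hp : p ∈ intrinsicInterior ℝ {π | φ π ≠ ⊤}) :
    ∃ (u : Fin N → Fin N → ℝ) (c : ℝ), ∀ y (t : ℝ), φ y ≤ t → c + frob u y ≤ t := by
  obtain ⟨r, hr⟩ := exists_real h (intrinsicInterior_subset hp)
  obtain ⟨L, hL⟩ := core_sep {z : (Fin N → Fin N → ℝ) × ℝ | φ (p + z.1) ≤ z.2} (by
      intro z hz z' hz' a b ha hb hab
      have := epi_convex h hz hz' ha hb hab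
      simp only [Set.mem_ofPred_eq, Prod.fst_add, Prod.smul_fst, Prod.snd_add, Prod.smul_snd,
        smul_eq_mul]
      convert this using 2
      rw [smul_add, smul_add, add_add_add_comm, ← add_smul, hab, one_smul])
    ⟨r, by simp [hr]⟩ (by
      intro z hz
      obtain ⟨ε, hε, H⟩ := ri_step _ p (p + z.1) hp (le_ne_top hz)
      have := H ε hε.le le_rfl
      obtain ⟨s, hs⟩ := exists_real h this
      refine ⟨ε, hε, s, ?_⟩
      simp only [add_sub_cancel_left] at hs
      simp [← sub_eq_add_neg, hs]) r (by
      intro t ht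
      simpa [hr] using ht)
  obtain ⟨u, hu⟩ := exists_frob L
  refine ⟨u, r - L p, fun y t hy => ?_⟩
  have := hL (y - p, t) (by simpa using hy)
  simp only [map_sub] at this
  rw [← hu]; linarith

lemma conj_le {φ : (Fin N → Fin N → ℝ) → EReal} (h : ProperLSCConvex φ)
    {u : Fin N → Fin N → ℝ} {c : ℝ} (H : ∀ y (t : ℝ), φ y ≤ t → frob u y - t ≤ c) :
    conj φ u ≤ c := by
  refine iSup_le fun y => ?_
  by_cases hy : φ y = ⊤
  · simp [hy]
  · obtain ⟨r, hr⟩ := exists_real h hy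
    rw [hr]
    exact_mod_cast H y r hr.le

lemma le_conj {φ : (Fin N → Fin N → ℝ) → EReal} 
    {u : Fin N → Fin N → ℝ} {c : ℝ} (H : conj φ u ≤ c) (y) (t : ℝ) (hy : φ y ≤ t) :
    frob u y - t ≤ c := by
  have h1 : ((frob u y : ℝ) : EReal) - φ y ≤ conj φ u :=
    le_iSup (fun π => ((frob u π : ℝ) : EReal) - φ π) y
  have h2 : ((frob u y : ℝ) : EReal) - t ≤ c :=
    (EReal.sub_le_sub le_rfl hy).trans (h1.trans H)
  exact_mod_cast h2

lemma conj_ne_bot {φ : (Fin N → Fin N → ℝ) → EReal} (h : ProperLSCConvex φ)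
    (u : Fin N → Fin N → ℝ) : conj φ u ≠ ⊥ := by
  obtain ⟨y, hy⟩ := h.2.1
  obtain ⟨r, hr⟩ := exists_real h hy
  have h1 : ((frob u y : ℝ) : EReal) - φ y ≤ conj φ u :=
    le_iSup (fun π => ((frob u π : ℝ) : EReal) - φ π) y
  rw [hr] at h1
  intro hb
  rw [hb, ← EReal.coe_sub] at h1
  exact absurd (le_bot_iff.1 h1) (EReal.coe_ne_bot _)

lemma frob_add (u v x : Fin N → Fin N → ℝ) : frob (u + v) x = frob u x + frob v x := by
  simp [frob, add_mul, Finset.sum_add_distrib]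

lemma frob_neg (u x : Fin N → Fin N → ℝ) : frob (-u) x = - frob u x := by
  simp [frob]

end KL
lemma P_real {N : ℕ} {φ₁ φ₂ : (Fin N → Fin N → ℝ) → EReal}
    (hφ₁ : ProperLSCConvex φ₁) (hφ₂ : ProperLSCConvex φ₂) (k : ℝ) (x : Fin N → Fin N → ℝ)
    (h : (k : EReal) + φ₁ x + φ₂ x ≠ ⊤) :
    ∃ t₁ t₂ : ℝ, φ₁ x = t₁ ∧ φ₂ x = t₂ := by
  have h2 : φ₂ x ≠ ⊤ := by
    intro h2
    apply h
    rw [h2]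
    apply EReal.add_top_of_ne_bot
    simp [EReal.add_eq_bot_iff, hφ₁.1 x]
  have h1 : φ₁ x ≠ ⊤ := by
    intro h1
    apply h
    rw [h1, EReal.coe_add_top]
    exact EReal.top_add_of_ne_bot (hφ₂.1 x)
  obtain ⟨t₁, e₁⟩ := exists_real hφ₁ h1
  obtain ⟨t₂, e₂⟩ := exists_real hφ₂ h2
  exact ⟨t₁, t₂, e₁, e₂⟩

lemma weak_gap {N : ℕ} {φ₁ φ₂ : (Fin N → Fin N → ℝ) → EReal} (ξ : Fin N → Fin N → ℝ)
    (hξ : ∀ i j, 0 < ξ i j) {u₁ u₂ : Fin N → Fin N → ℝ} {c₁ c₂ : ℝ}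
    (h₁ : conj φ₁ u₁ ≤ c₁) (h₂ : conj φ₂ u₂ ≤ c₂) (x : Fin N → Fin N → ℝ)
    (hx : ∀ i j, 0 ≤ x i j) (t₁ t₂ : ℝ) (ht₁ : φ₁ x ≤ t₁) (ht₂ : φ₂ x ≤ t₂) :
    ∑ i, ∑ j, (√(x i j) - √(ξ i j * Real.exp (-(u₁ i j + u₂ i j)))) ^ 2 ≤
      KLmat x ξ + t₁ + t₂ -
      (-c₁ - c₂ - (∑ i, ∑ j, ξ i j * Real.exp (-(u₁ i j + u₂ i j))) + ∑ i, ∑ j, ξ i j) := by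
  have h := KL_gap ξ x (u₁ + u₂) hξ hx
  have e1 := le_conj h₁ x t₁ ht₁
  have e2 := le_conj h₂ x t₂ ht₂
  rw [frob_add] at h
  simp only [Pi.add_apply] at h
  linarith

lemma P_lsc {N : ℕ} {φ₁ φ₂ : (Fin N → Fin N → ℝ) → EReal}
    (hφ₁ : ProperLSCConvex φ₁) (hφ₂ : ProperLSCConvex φ₂) (ξ : Fin N → Fin N → ℝ)
    (hξ : ∀ i j, 0 < ξ i j) :
    LowerSemicontinuous fun π => ((KLmat π ξ : ℝ) : EReal) + φ₁ π + φ₂ π := by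
  have h0 : LowerSemicontinuous fun π : Fin N → Fin N → ℝ => ((KLmat π ξ : ℝ) : EReal) :=
    (continuous_coe_real_ereal.comp (KL_cont ξ hξ)).lowerSemicontinuous
  refine (h0.add' hφ₁.2.2.1 fun x => ?_).add' hφ₂.2.2.1 fun x => ?_
  · exact EReal.continuousAt_add (Or.inl (EReal.coe_ne_top _)) (Or.inl (EReal.coe_ne_bot _))
  · refine EReal.continuousAt_add (Or.inr (hφ₂.1 x)) (Or.inl ?_)
    simp [EReal.add_eq_bot_iff, hφ₁.1 x]

lemma dual_exists {N : ℕ} 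
    (ξ : Fin N → Fin N → ℝ) (hξ : ∀ i j, 0 < ξ i j)
    (φ₁ φ₂ : (Fin N → Fin N → ℝ) → EReal)
    (hφ₁ : ProperLSCConvex φ₁) (hφ₂ : ProperLSCConvex φ₂)
    (p : Fin N → Fin N → ℝ) (hp₁ : p ∈ intrinsicInterior ℝ {π | φ₁ π ≠ ⊤})
    (hp₂ : p ∈ intrinsicInterior ℝ {π | φ₂ π ≠ ⊤}) (hp : ∀ i j, 0 < p i j) (m : ℝ)
    (hm : ∀ (x : Fin N → Fin N → ℝ) (t₁ t₂ : ℝ), (∀ i j, 0 ≤ x i j) → φ₁ x ≤ t₁ → φ₂ x ≤ t₂ →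
      m ≤ KLmat x ξ + t₁ + t₂) :
    ∃ (u₁ u₂ : Fin N → Fin N → ℝ) (c₁ c₂ : ℝ), conj φ₁ u₁ = c₁ ∧ conj φ₂ u₂ = c₂ ∧
      m ≤ -c₁ - c₂ - (∑ i, ∑ j, ξ i j * Real.exp (-(u₁ i j + u₂ i j))) + ∑ i, ∑ j, ξ i j := by
  obtain ⟨r₁, hr₁⟩ := exists_real hφ₁ (intrinsicInterior_subset hp₁)
  obtain ⟨r₂, hr₂⟩ := exists_real hφ₂ (intrinsicInterior_subset hp₂)
  have hp₀ : p ∈ intrinsicInterior ℝ {π : Fin N → Fin N → ℝ | ∀ i j, 0 ≤ π i j} := by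
    apply interior_subset_intrinsicInterior
    have ho : IsOpen {π : Fin N → Fin N → ℝ | ∀ i j, 0 < π i j} := by
      simp only [Set.ofPred_forall]
      refine isOpen_iInter_of_finite fun i => isOpen_iInter_of_finite fun j => ?_
      exact isOpen_lt continuous_const (by fun_prop)
    exact interior_maximal (fun x hx i j => (hx i j).le) ho hp
  obtain ⟨L, hL⟩ := core_sep
    {z : ((Fin N → Fin N → ℝ) × (Fin N → Fin N → ℝ)) × ℝ |
      ∃ (x y₁ y₂ : Fin N → Fin N → ℝ) (t₁ t₂ : ℝ), (∀ i j, 0 ≤ x i j) ∧ φ₁ y₁ ≤ t₁ ∧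
        φ₂ y₂ ≤ t₂ ∧ z.1 = (x - y₁, x - y₂) ∧ KLmat x ξ + t₁ + t₂ ≤ z.2} (by
      rintro z ⟨x, y₁, y₂, t₁, t₂, hx, h1, h2, hz, hz2⟩ z' ⟨x', y₁', y₂', t₁', t₂', hx', h1', h2',
        hz', hz2'⟩ a b ha hb hab
      refine ⟨a • x + b • x', a • y₁ + b • y₁', a • y₂ + b • y₂', a * t₁ + b * t₁',
        a * t₂ + b * t₂', ?_, epi_convex hφ₁ h1 h1' ha hb hab, epi_convex hφ₂ h2 h2' ha hb hab,
        ?_, ?_⟩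
      · intro i j
        have e1 := mul_nonneg ha (hx i j)
        have e2 := mul_nonneg hb (hx' i j)
        simpa using add_nonneg e1 e2
      · simp only [Prod.fst_add, Prod.smul_fst, hz, hz', Prod.smul_mk, Prod.mk_add_mk, smul_sub]
        congr 1 <;> abel
      · have e := KL_convex ξ x x' hξ hx hx' a b ha hb hab
        have e1 := mul_le_mul_of_nonneg_left hz2 ha
        have e2 := mul_le_mul_of_nonneg_left hz2' hb
        simp only [Prod.snd_add, Prod.smul_snd, smul_eq_mul]
        linarith)
    ⟨_, p, p, p, r₁, r₂, fun i j => (hp i j).le, hr₁.le, hr₂.le, by simp; rfl, le_rfl⟩ (by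
      rintro z ⟨x, y₁, y₂, t₁, t₂, hx, h1, h2, hz, hz2⟩
      obtain ⟨ε₀, hε₀, H₀⟩ := ri_step _ p x hp₀ hx
      obtain ⟨ε₁, hε₁, H₁⟩ := ri_step _ p y₁ hp₁ (le_ne_top h1)
      obtain ⟨ε₂, hε₂, H₂⟩ := ri_step _ p y₂ hp₂ (le_ne_top h2)
      have hε : 0 < min ε₀ (min ε₁ ε₂) := lt_min hε₀ (lt_min hε₁ hε₂)
      have k₀ := H₀ _ hε.le (min_le_left _ _)
      have k₁ := H₁ _ hε.le ((min_le_right _ _).trans (min_le_left _ _))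
      have k₂ := H₂ _ hε.le ((min_le_right _ _).trans (min_le_right _ _))
      obtain ⟨s₁, hs₁⟩ := exists_real hφ₁ k₁
      obtain ⟨s₂, hs₂⟩ := exists_real hφ₂ k₂
      refine ⟨_, hε, _, _, _, _, s₁, s₂, k₀, hs₁.le, hs₂.le, ?_, le_rfl⟩
      generalize min ε₀ (min ε₁ ε₂) = ε
      simp only [hz, Prod.smul_mk, Prod.neg_mk]
      congr 1 <;> module) m (by
      rintro t ⟨x, y₁, y₂, t₁, t₂, hx, h1, h2, hz, hz2⟩
      have e := Prod.mk.inj hz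
      have e1 : x = y₁ := (sub_eq_zero.1 e.1.symm)
      have e2 : x = y₂ := (sub_eq_zero.1 e.2.symm)
      subst e1
      subst e2
      exact (hm x t₁ t₂ hx h1 h2).trans hz2)
  obtain ⟨w₁, hw₁⟩ := exists_frob (L ∘ₗ LinearMap.inl ℝ _ _)
  obtain ⟨w₂, hw₂⟩ := exists_frob (L ∘ₗ LinearMap.inr ℝ _ _)
  have hLw : ∀ a b, L (a, b) = frob w₁ a + frob w₂ b := by
    intro a b
    rw [← hw₁, ← hw₂]
    simp [← map_add]
  have fsub : ∀ w x y : Fin N → Fin N → ℝ, frob w (x - y) = frob w x - frob w y := by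
    intro w x y
    simp [frob, mul_sub, Finset.sum_sub_distrib]
  have main : ∀ (x y₁ y₂ : Fin N → Fin N → ℝ) (t₁ t₂ : ℝ), (∀ i j, 0 ≤ x i j) → φ₁ y₁ ≤ t₁ →
      φ₂ y₂ ≤ t₂ → m + (frob w₁ x - frob w₁ y₁ + (frob w₂ x - frob w₂ y₂))
        ≤ KLmat x ξ + t₁ + t₂ := by
    intro x y₁ y₂ t₁ t₂ hx h1 h2
    have := hL ((x - y₁, x - y₂), KLmat x ξ + t₁ + t₂) ⟨x, y₁, y₂, t₁, t₂, hx, h1, h2, rfl, le_rfl⟩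
    simpa only [hLw, fsub] using this
  have hE := KL_eq ξ (-w₁ + -w₂) hξ
  have main2 : ∀ (y₁ y₂ : Fin N → Fin N → ℝ) (t₁ t₂ : ℝ), φ₁ y₁ ≤ t₁ →
      φ₂ y₂ ≤ t₂ → (frob (-w₁) y₁ - t₁) + (frob (-w₂) y₂ - t₂) ≤
        (∑ i, ∑ j, ξ i j) - (∑ i, ∑ j, ξ i j * Real.exp (-(-w₁ + -w₂) i j)) - m := by
    intro y₁ y₂ t₁ t₂ h1 h2
    have := main (fun i j => ξ i j * Real.exp (-(-w₁ + -w₂) i j)) y₁ y₂ t₁ t₂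
      (fun i j => (mul_pos (hξ i j) (Real.exp_pos _)).le) h1 h2
    rw [frob_add, frob_neg, frob_neg] at hE
    rw [frob_neg, frob_neg]
    linarith
  generalize hM : (∑ i, ∑ j, ξ i j) - (∑ i, ∑ j, ξ i j * Real.exp (-(-w₁ + -w₂) i j)) - m = M
    at main2
  have b1 : ∀ y₂ (t₂ : ℝ), φ₂ y₂ ≤ t₂ →
      conj φ₁ (-w₁) ≤ ((M - (frob (-w₂) y₂ - t₂) : ℝ) : EReal) := by
    intro y₂ t₂ h2
    refine conj_le hφ₁ fun y t hy => ?_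
    have := main2 y y₂ t t₂ hy h2
    linarith
  obtain ⟨c₁, hc₁⟩ : ∃ c : ℝ, conj φ₁ (-w₁) = c :=
    ⟨_, (EReal.coe_toReal (le_ne_top (b1 p r₂ hr₂.le)) (conj_ne_bot hφ₁ _)).symm⟩
  have b2 : conj φ₂ (-w₂) ≤ ((M - c₁ : ℝ) : EReal) := by
    refine conj_le hφ₂ fun y t hy => ?_
    have := b1 y t hy
    rw [hc₁, EReal.coe_le_coe_iff] at this
    linarith
  obtain ⟨c₂, hc₂⟩ : ∃ c : ℝ, conj φ₂ (-w₂) = c :=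
    ⟨_, (EReal.coe_toReal (le_ne_top b2) (conj_ne_bot hφ₂ _)).symm⟩
  refine ⟨-w₁, -w₂, c₁, c₂, hc₁, hc₂, ?_⟩
  rw [hc₂, EReal.coe_le_coe_iff] at b2
  simp only [Pi.add_apply] at hM
  linarith

/-- Strong duality for KL-regularized problems, attainment of the dual maximum, and
recovery of the unique primal minimizer `π* = ξ ⊙ e^{-u₁*-u₂*}`. -/
theorem KL_strong_duality {N : ℕ} (hN : 1 ≤ N)
    (ξ : Fin N → Fin N → ℝ) (hξ : ∀ i j, 0 < ξ i j)
    (φ₁ φ₂ : (Fin N → Fin N → ℝ) → EReal)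
    (hφ₁ : ProperLSCConvex φ₁) (hφ₂ : ProperLSCConvex φ₂)
    (hqual : (intrinsicInterior ℝ {π | φ₁ π ≠ ⊤} ∩ intrinsicInterior ℝ {π | φ₂ π ≠ ⊤} ∩
      {π : Fin N → Fin N → ℝ | ∀ i j, 0 < π i j}).Nonempty)
    (P : (Fin N → Fin N → ℝ) → EReal)
    (hP : P = fun π => ((KLmat π ξ : ℝ) : EReal) + φ₁ π + φ₂ π)
    (D : (Fin N → Fin N → ℝ) → (Fin N → Fin N → ℝ) → EReal)
    (hD : D = fun u₁ u₂ =>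
      -conj φ₁ u₁ - conj φ₂ u₂ -
        ((∑ i, ∑ j, ξ i j * Real.exp (-(u₁ i j + u₂ i j)) : ℝ) : EReal) +
        ((∑ i, ∑ j, ξ i j : ℝ) : EReal)) :
    ∃ (u₁s u₂s : Fin N → Fin N → ℝ),
      (∀ u₁ u₂ : Fin N → Fin N → ℝ, D u₁ u₂ ≤ D u₁s u₂s) ∧
      (let πs : Fin N → Fin N → ℝ := fun i j => ξ i j * Real.exp (-(u₁s i j + u₂s i j))
       (∀ π : Fin N → Fin N → ℝ, (∀ i j, 0 ≤ π i j) → P πs ≤ P π) ∧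
       (∀ π : Fin N → Fin N → ℝ, (∀ i j, 0 ≤ π i j) →
          (∀ π' : Fin N → Fin N → ℝ, (∀ i j, 0 ≤ π' i j) → P π ≤ P π') → π = πs) ∧
       P πs = D u₁s u₂s) := by
  subst hP hD
  obtain ⟨p, ⟨hp₁, hp₂⟩, hp⟩ := hqual
  obtain ⟨r₁, hr₁⟩ := exists_real hφ₁ (intrinsicInterior_subset hp₁)
  obtain ⟨r₂, hr₂⟩ := exists_real hφ₂ (intrinsicInterior_subset hp₂)
  obtain ⟨a₁, b₁, hab₁⟩ := minorant hφ₁ hp₁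
  obtain ⟨a₂, b₂, hab₂⟩ := minorant hφ₂ hp₂
  let A : Set ℝ := {r | ∃ (x : Fin N → Fin N → ℝ) (t₁ t₂ : ℝ), (∀ i j, 0 ≤ x i j) ∧
    φ₁ x ≤ t₁ ∧ φ₂ x ≤ t₂ ∧ r = KLmat x ξ + t₁ + t₂}
  have hAne : A.Nonempty := ⟨_, p, r₁, r₂, fun i j => (hp i j).le, hr₁.le, hr₂.le, rfl⟩
  have hAbd : BddBelow A := by
    refine ⟨b₁ + b₂ + (∑ i, ∑ j, ξ i j) -
      (∑ i, ∑ j, ξ i j * Real.exp (-(a₁ + a₂) i j)), ?_⟩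
    rintro r ⟨x, t₁, t₂, hx, h1, h2, rfl⟩
    have e := KL_gap ξ x (a₁ + a₂) hξ hx
    have e0 : 0 ≤ ∑ i, ∑ j, (√(x i j) - √(ξ i j * Real.exp (-(a₁ + a₂) i j))) ^ 2 :=
      Finset.sum_nonneg fun i _ => Finset.sum_nonneg fun j _ => sq_nonneg _
    have e1 := hab₁ x t₁ h1
    have e2 := hab₂ x t₂ h2
    rw [frob_add] at e
    linarith
  have hm : ∀ (x : Fin N → Fin N → ℝ) (t₁ t₂ : ℝ), (∀ i j, 0 ≤ x i j) → φ₁ x ≤ t₁ → φ₂ x ≤ t₂ →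
      sInf A ≤ KLmat x ξ + t₁ + t₂ :=
    fun x t₁ t₂ hx h1 h2 => csInf_le hAbd ⟨x, t₁, t₂, hx, h1, h2, rfl⟩
  obtain ⟨u₁, u₂, c₁, c₂, hc₁, hc₂, hmd⟩ :=
    dual_exists ξ hξ φ₁ φ₂ hφ₁ hφ₂ p hp₁ hp₂ hp (sInf A) hm
  have weak : ∀ (v₁ v₂ : Fin N → Fin N → ℝ) (e₁ e₂ : ℝ), conj φ₁ v₁ ≤ e₁ → conj φ₂ v₂ ≤ e₂ →
      -e₁ - e₂ - (∑ i, ∑ j, ξ i j * Real.exp (-(v₁ i j + v₂ i j))) + (∑ i, ∑ j, ξ i j)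
        ≤ sInf A := by
    intro v₁ v₂ e₁ e₂ h1 h2
    refine le_csInf hAne ?_
    rintro r ⟨x, t₁, t₂, hx, k1, k2, rfl⟩
    have e := weak_gap ξ hξ h1 h2 x hx t₁ t₂ k1 k2
    have e0 : 0 ≤ ∑ i, ∑ j, (√(x i j) - √(ξ i j * Real.exp (-(v₁ i j + v₂ i j)))) ^ 2 :=
      Finset.sum_nonneg fun i _ => Finset.sum_nonneg fun j _ => sq_nonneg _
    linarith
  have hd := le_antisymm hmd (weak u₁ u₂ c₁ c₂ hc₁.le hc₂.le)
  have gap : ∀ (x : Fin N → Fin N → ℝ), (∀ i j, 0 ≤ x i j) → ∀ t₁ t₂ : ℝ, φ₁ x ≤ t₁ → φ₂ x ≤ t₂ →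
      ∑ i, ∑ j, (√(x i j) - √(ξ i j * Real.exp (-(u₁ i j + u₂ i j)))) ^ 2 ≤
      KLmat x ξ + t₁ + t₂ - sInf A := by
    intro x hx t₁ t₂ h1 h2
    rw [hd]
    exact weak_gap ξ hξ hc₁.le hc₂.le x hx t₁ t₂ h1 h2
  have hDs : -conj φ₁ u₁ - conj φ₂ u₂ -
        ((∑ i, ∑ j, ξ i j * Real.exp (-(u₁ i j + u₂ i j)) : ℝ) : EReal) +
        ((∑ i, ∑ j, ξ i j : ℝ) : EReal) = ((sInf A : ℝ) : EReal) := by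
    rw [hc₁, hc₂, hd]
    norm_cast
  have hlow : ∀ x : Fin N → Fin N → ℝ, (∀ i j, 0 ≤ x i j) →
      ((sInf A : ℝ) : EReal) ≤ ((KLmat x ξ : ℝ) : EReal) + φ₁ x + φ₂ x := by
    intro x hx
    by_cases h : ((KLmat x ξ : ℝ) : EReal) + φ₁ x + φ₂ x = ⊤
    · rw [h]; exact le_top
    · obtain ⟨t₁, t₂, h1, h2⟩ := P_real hφ₁ hφ₂ _ x h
      rw [h1, h2]
      exact_mod_cast hm x t₁ t₂ hx h1.le h2.le
  have term : ∀ (x q : Fin N → Fin N → ℝ) (δ : ℝ), 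
      ∑ i, ∑ j, (√(x i j) - √(q i j)) ^ 2 ≤ δ → ∀ i j, (√(x i j) - √(q i j)) ^ 2 ≤ δ := by
    intro x q δ h i j
    refine le_trans ?_ h
    refine le_trans ?_ (Finset.single_le_sum
      (f := fun i => ∑ j, (√(x i j) - √(q i j)) ^ 2)
      (fun i _ => Finset.sum_nonneg fun j _ => sq_nonneg _) (Finset.mem_univ i))
    exact Finset.single_le_sum (f := fun j => (√(x i j) - √(q i j)) ^ 2)
      (fun j _ => sq_nonneg _) (Finset.mem_univ j)
  have hpos : ∀ i j, 0 ≤ ξ i j * Real.exp (-(u₁ i j + u₂ i j)) :=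
    fun i j => (mul_pos (hξ i j) (Real.exp_pos _)).le
  have hPs : ((KLmat (fun i j => ξ i j * Real.exp (-(u₁ i j + u₂ i j))) ξ : ℝ) : EReal) +
      φ₁ (fun i j => ξ i j * Real.exp (-(u₁ i j + u₂ i j))) +
      φ₂ (fun i j => ξ i j * Real.exp (-(u₁ i j + u₂ i j))) = ((sInf A : ℝ) : EReal) := by
    refine le_antisymm ?_ (hlow _ hpos)
    by_contra hlt
    rw [not_le] at hlt
    obtain ⟨y, hy1, hy2⟩ := EReal.lt_iff_exists_real_btwn.1 hlt
    rw [EReal.coe_lt_coe_iff] at hy1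
    have hseq : ∀ n : ℕ, ∃ x : Fin N → Fin N → ℝ, ∃ t₁ t₂ : ℝ, (∀ i j, 0 ≤ x i j) ∧ φ₁ x ≤ t₁ ∧
        φ₂ x ≤ t₂ ∧ KLmat x ξ + t₁ + t₂ < sInf A + 1 / ((n : ℝ) + 1) := by
      intro n
      have hn : (0 : ℝ) < 1 / ((n : ℝ) + 1) := by positivity
      obtain ⟨r, ⟨x, t₁, t₂, hx, h1, h2, rfl⟩, hr⟩ := exists_lt_of_csInf_lt hAne
        (lt_add_of_pos_right (sInf A) hn)
      exact ⟨x, t₁, t₂, hx, h1, h2, hr⟩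
    choose x t₁ t₂ hx h1 h2 hlt' using hseq
    have hconv : Filter.Tendsto x Filter.atTop
        (nhds (fun i j => ξ i j * Real.exp (-(u₁ i j + u₂ i j)))) := by
      rw [tendsto_pi_nhds]
      intro i
      rw [tendsto_pi_nhds]
      intro j
      have hb : ∀ n, (√(x n i j) - √(ξ i j * Real.exp (-(u₁ i j + u₂ i j)))) ^ 2
          ≤ 1 / ((n : ℝ) + 1) := by
        intro n
        refine term (x n) (fun i j => ξ i j * Real.exp (-(u₁ i j + u₂ i j))) _ ?_ i j
        have := gap (x n) (hx n) (t₁ n) (t₂ n) (h1 n) (h2 n)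
        have := hlt' n
        linarith
      have hsq := squeeze_zero (fun n => sq_nonneg _) hb tendsto_one_div_add_atTop_nhds_zero_nat
      have habs := hsq.sqrt
      simp only [Real.sqrt_sq_eq_abs, Real.sqrt_zero] at habs
      have h0 := (tendsto_zero_iff_abs_tendsto_zero _).2 habs
      have h3 := (h0.add_const (√(ξ i j * Real.exp (-(u₁ i j + u₂ i j))))).pow 2
      simp only [sub_add_cancel, zero_add, Real.sq_sqrt (hpos i j)] at h3
      refine h3.congr fun n => ?_
      exact Real.sq_sqrt (hx n i j)
    have hev := hconv.eventually (P_lsc hφ₁ hφ₂ ξ hξ _ _ hy2)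
    have hev2 : ∀ᶠ n : ℕ in Filter.atTop, 1 / ((n : ℝ) + 1) < y - sInf A :=
      (tendsto_order.1 tendsto_one_div_add_atTop_nhds_zero_nat).2 _ (by linarith)
    obtain ⟨n, k1, k2⟩ := (hev.and hev2).exists
    have k3 : ((KLmat (x n) ξ : ℝ) : EReal) + φ₁ (x n) + φ₂ (x n) ≤
        ((KLmat (x n) ξ + t₁ n + t₂ n : ℝ) : EReal) := by
      push_cast
      exact add_le_add (add_le_add le_rfl (h1 n)) (h2 n)
    have k4 := lt_of_lt_of_le k1 k3
    rw [EReal.coe_lt_coe_iff] at k4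
    have := hlt' n
    linarith
  refine ⟨u₁, u₂, ?_, ?_, ?_, ?_⟩
  · intro v₁ v₂
    simp only
    rw [hDs]
    by_cases e1 : conj φ₁ v₁ = ⊤
    · simp [e1]
    by_cases e2 : conj φ₂ v₂ = ⊤
    · simp [e2]
    obtain ⟨d₁, hd₁⟩ : ∃ c : ℝ, conj φ₁ v₁ = c :=
      ⟨_, (EReal.coe_toReal e1 (conj_ne_bot hφ₁ _)).symm⟩
    obtain ⟨d₂, hd₂⟩ : ∃ c : ℝ, conj φ₂ v₂ = c :=
      ⟨_, (EReal.coe_toReal e2 (conj_ne_bot hφ₂ _)).symm⟩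
    have := weak v₁ v₂ d₁ d₂ hd₁.le hd₂.le
    rw [hd₁, hd₂]
    exact_mod_cast this
  · intro π hπ
    simp only
    rw [hPs]
    exact hlow π hπ
  · intro π hπ hmin
    have h := hmin _ hpos
    simp only at h
    rw [hPs] at h
    obtain ⟨s₁, s₂, h1, h2⟩ := P_real hφ₁ hφ₂ _ π (le_ne_top h)
    rw [h1, h2] at h
    have h' : KLmat π ξ + s₁ + s₂ ≤ sInf A := by exact_mod_cast h
    have g := gap π hπ s₁ s₂ h1.le h2.le
    have g0 := term π (fun i j => ξ i j * Real.exp (-(u₁ i j + u₂ i j))) 0 (by linarith)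
    ext i j
    have h3 := pow_eq_zero_iff (two_ne_zero) |>.1 (le_antisymm (g0 i j) (sq_nonneg _))
    exact (Real.sqrt_inj (hπ i j) (hpos i j)).1 (sub_eq_zero.1 h3)
  · simp only
    rw [hPs, hDs]
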